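/- Let K be a finite field of characteristic p and let d be an integer with gcd(d, |K| − 1) = 1. If the set {W_{K,d}(a) : a ∈ K^×} has exactly 3 elements, then d ≡ 1 (mod p − 1), for every a ∈ K^× the value W_{K,d}(a) is a rational integer (i.e., equals n for some n ∈ ℤ), and there exists a ∈ K^× with W_{K,d}(a) = 0. -/

import Mathlib

open scoped BigOperators Classical

/-- The canonical additive character of a finite field `K` of characteristic `p`:
`ψ_K(x) = exp(2πi · Tr_{K/F_p}(x) / p)`, where `Tr_{K/F_p}` is the absolute trace. -/
noncomputable def canonicalAddChar (p : ℕ) [Fact p.Prime] (K : Type) [Field K] [Fintype K]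
    [Algebra (ZMod p) K] (x : K) : ℂ :=
  Complex.exp (2 * Real.pi * Complex.I * ((Algebra.trace (ZMod p) K x).val : ℂ) / (p : ℂ))

/-- The Weil sum `W_{K,d}(a) = ∑_{x ∈ K} ψ_K(x^d + a·x)`. -/
noncomputable def weilSum (p : ℕ) [Fact p.Prime] (K : Type) [Field K] [Fintype K]
    [Algebra (ZMod p) K] (d : ℤ) (a : K) : ℂ :=
  ∑ x : K, canonicalAddChar p K (x ^ d + a * x)

/-- The value set `{W_{K,d}(a) : a ∈ K^×}` of the Weil sum. -/
noncomputable def weilValues (p : ℕ) [Fact p.Prime] (K : Type) [Field K] [Fintype K]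
    [Algebra (ZMod p) K] (d : ℤ) : Set ℂ :=
  {w : ℂ | ∃ a : K, a ≠ 0 ∧ weilSum p K d a = w}

/-- `d` is degenerate over a finite field of order `q` and characteristic `p` if
`d ≡ p^j (mod q − 1)` for some nonnegative integer `j`. -/
def IsDegenerate (p : ℕ) (q : ℕ) (d : ℤ) : Prop :=
  ∃ j : ℕ, d ≡ (p : ℤ) ^ j [ZMOD (q : ℤ) - 1]

/-!
Write `W u` for the Weil sum at a unit `u` and `q` for the order of `K`. Fourier analysis on `K`
gives `∑ W u = q`, `∑ W u ^ 2 = q ^ 2`, `q ^ 2 ∣ ∑ W u ^ 3` and `∑ W u * W (c * u) = 0` for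
`c ≠ 1`.

A generator `σ` of the Galois group of the `p`-th cyclotomic field acts by `σ (W u) = W (c * u)`
for a fixed `c`, and so permutes the three values. If `c ≠ 1`, then `∑ W u * σ (W u) = 0`, which
the first two moments rule out for each cycle type of the permutation. Hence `c = 1`: the values
are rational integers, and `c = 1` says exactly that the generator of `𝔽_p^×` defining `σ` is
fixed by `x ↦ x ^ d`.

If none of the three integer values were zero, then all of them would be smaller than `q` in
absolute value. The second moment would then bound the product of two adjacent values `y < 0 < z`
by `-(y * z) < 2 * q`, while the third moment would make `p * q` divide it.
-/

section PrimePowers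

variable {R : Type*}

lemma exists_eq_pow_mul_of_not_pow_dvd [Monoid R] {p x : R} {n : ℕ} (h : ¬ p ^ n ∣ x) :
    ∃ a < n, ∃ y, x = p ^ a * y ∧ ¬ p ∣ y := by
  have hfin : FiniteMultiplicity p x :=
    ⟨n, fun hdvd => h ((pow_dvd_pow p n.le_succ).trans hdvd)⟩
  obtain ⟨y, hxy, hy⟩ := hfin.exists_eq_pow_mul_and_not_dvd
  exact ⟨multiplicity p x, hfin.multiplicity_lt_iff_not_dvd.2 h, y, hxy, hy⟩

variable [CommRing R] [IsDomain R] {p : R} {n : ℕ}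

lemma pow_dvd_or_pow_dvd_of_sq_dvd_mul {x y : R} (hp : Prime p) (h : (p ^ n) ^ 2 ∣ x * y) :
    p ^ n ∣ x ∨ p ^ n ∣ y := by
  by_contra! hne
  obtain ⟨a, ha, x, rfl, hx⟩ := exists_eq_pow_mul_of_not_pow_dvd hne.1
  obtain ⟨b, hb, y, rfl, hy⟩ := exists_eq_pow_mul_of_not_pow_dvd hne.2
  rw [← pow_mul, mul_mul_mul_comm, ← pow_add] at h
  have hdvd := hp.pow_dvd_of_dvd_mul_right _ (hp.not_dvd_mul hx hy) h
  have hle := (pow_dvd_pow_iff hp.ne_zero hp.not_isUnit).1 hdvd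
  omega

/- Dividing by `x * y * z`, the left-hand side becomes `(p ^ n - 1) - p ^ n * (1/x + 1/y + 1/z)`,
a `p`-adic unit, so `x * y * z` itself has valuation at least `2 * n`. -/
lemma pow_succ_dvd_mul_of_sq_dvd {x y z : R} (hp : Prime p)
    (hpx : ¬ p ^ n ∣ x) (hpy : ¬ p ^ n ∣ y) (hpz : ¬ p ^ n ∣ z)
    (h : (p ^ n) ^ 2 ∣ x * y * z * (p ^ n - 1) - p ^ n * (x * y + y * z + z * x)) :
    p ^ (n + 1) ∣ x * y := by
  obtain ⟨a, ha, x, rfl, hx⟩ := exists_eq_pow_mul_of_not_pow_dvd hpx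
  obtain ⟨b, hb, y, rfl, hy⟩ := exists_eq_pow_mul_of_not_pow_dvd hpy
  obtain ⟨c, hc, z, rfl, hz⟩ := exists_eq_pow_mul_of_not_pow_dvd hpz
  have split (e : ℕ) (he : e < n) : ∃ r, p ^ n = p ^ e * (p * r) :=
    ⟨p ^ (n - e - 1), by rw [← pow_succ', ← pow_add]; congr 1; omega⟩
  obtain ⟨α, hα⟩ := split a ha
  obtain ⟨β, hβ⟩ := split b hb
  obtain ⟨γ, hγ⟩ := split c hc
  let u := x * y * z * (p ^ n - 1) - p * (γ * x * y + α * y * z + β * z * x)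
  have hu : ¬ p ∣ u := by
    rintro ⟨v, hv⟩
    refine hp.not_dvd_mul (hp.not_dvd_mul hx hy) hz
      ⟨x * y * z * (p ^ a * α) - (γ * x * y + α * y * z + β * z * x) - v, ?_⟩
    linear_combination x * y * z * hα - hv
  have hdvd : p ^ (2 * n) ∣ p ^ (a + b + c) := by
    refine hp.pow_dvd_of_dvd_mul_right _ hu ?_
    rw [mul_comm 2 n, pow_mul]
    convert h using 1
    linear_combination (p ^ a * x) * (p ^ b * y) * hγ + (p ^ b * y) * (p ^ c * z) * hα
      + (p ^ c * z) * (p ^ a * x) * hβ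
  have hle := (pow_dvd_pow_iff hp.ne_zero hp.not_isUnit).1 hdvd
  rw [mul_mul_mul_comm, ← pow_add]
  exact (pow_dvd_pow p (by omega)).mul_right _

end PrimePowers

section PowerSums

variable {ι : Type*} [Fintype ι]

lemma sum_sub_mul_sub {R : Type*} [CommRing R] (f : ι → R) (y z : R) :
    ∑ i, (f i - y) * (f i - z) =
      ∑ i, f i ^ 2 - (y + z) * ∑ i, f i + y * z * Fintype.card ι := by
  calc ∑ i, (f i - y) * (f i - z) = ∑ i, (f i ^ 2 - (y + z) * f i + y * z) :=
        Finset.sum_congr rfl fun i _ => by ring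
    _ = _ := by
        rw [Finset.sum_add_distrib, Finset.sum_sub_distrib, ← Finset.mul_sum, Finset.sum_const,
          Finset.card_univ, nsmul_eq_mul, mul_comm (y * z)]

lemma sum_sub_mul_sub_mul_sub {R : Type*} [CommRing R] (f : ι → R) (x y z : R) :
    ∑ i, (f i - x) * (f i - y) * (f i - z) =
      ∑ i, f i ^ 3 - (x + y + z) * ∑ i, f i ^ 2 + (x * y + y * z + z * x) * ∑ i, f i
        - x * y * z * Fintype.card ι := by
  calc ∑ i, (f i - x) * (f i - y) * (f i - z)
      = ∑ i, (f i ^ 3 - (x + y + z) * f i ^ 2 + (x * y + y * z + z * x) * f i - x * y * z) :=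
        Finset.sum_congr rfl fun i _ => by ring
    _ = _ := by
        rw [Finset.sum_sub_distrib, Finset.sum_add_distrib, Finset.sum_sub_distrib,
          ← Finset.mul_sum, ← Finset.mul_sum, Finset.sum_const, Finset.card_univ, nsmul_eq_mul,
          mul_comm (x * y * z)]

end PowerSums

section IntegerValues

lemma exists_range_eq_of_ncard_eq_three {α : Type*} [LinearOrder α] {s : Set α}
    (hs : s.ncard = 3) : ∃ x y z, x < y ∧ y < z ∧ s = {x, y, z} := by
  obtain ⟨a, b, c, hab, hac, hbc, rfl⟩ := Set.ncard_eq_three.1 hs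
  rcases lt_or_gt_of_ne hab with h | h <;> rcases lt_or_gt_of_ne hac with h' | h' <;>
    rcases lt_or_gt_of_ne hbc with h'' | h'' <;> grind

variable {ι : Type*} [Fintype ι] {f : ι → ℤ} {q : ℤ} {p n : ℕ}

lemma abs_lt_of_sum_sq_eq_sq {i j : ι} (hq : 0 ≤ q) (hsum : ∑ i, f i ^ 2 = q ^ 2) (hij : i ≠ j)
    (hj : f j ≠ 0) : |f i| < q := by
  have hle : f i ^ 2 + f j ^ 2 ≤ ∑ i, f i ^ 2 :=
    Finset.add_le_sum (fun i _ => sq_nonneg (f i)) (Finset.mem_univ i) (Finset.mem_univ j) hij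
  have := sq_pos_of_ne_zero hj
  exact abs_lt_of_sq_lt_sq (by linarith) hq

/- The sum of `(f i - y) * (f i - z)` would be negative: its summands are not, because no value
of `f` lies strictly between `y` and `z`. -/
lemma neg_mul_lt_of_adjacent {y z : ℤ} (hcard : (Fintype.card ι : ℤ) = q - 1)
    (h1 : ∑ i, f i = q) (h2 : ∑ i, f i ^ 2 = q ^ 2) (hgap : ∀ i, f i ≤ y ∨ z ≤ f i)
    (hy : y < 0) (hz : 0 < z) (hqy : -q < y) : -(y * z) < 2 * q := by
  by_contra! hyz
  have hnonneg : 0 ≤ ∑ i, (f i - y) * (f i - z) := Finset.sum_nonneg fun i _ => by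
    rcases hgap i with h | h <;> nlinarith
  rw [sum_sub_mul_sub, h1, h2, hcard] at hnonneg
  have hz2 : 2 < z := by nlinarith
  nlinarith

lemma exists_neg_of_sum_sq_eq_sq (hlt : ∀ i, f i < q) (h1 : ∑ i, f i = q)
    (h2 : ∑ i, f i ^ 2 = q ^ 2) {j : ι} (hj : f j ≠ 0) : ∃ i, f i < 0 := by
  by_contra! hpos
  have hterm (i : ι) : 0 ≤ f i * (q - f i) := mul_nonneg (hpos i) (sub_nonneg.2 (hlt i).le)
  have hsum : 0 < ∑ i, f i * (q - f i) := Finset.sum_pos' (fun i _ => hterm i)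
    ⟨j, Finset.mem_univ j, mul_pos ((hpos j).lt_of_ne' hj) (sub_pos.2 (hlt j))⟩
  simp only [mul_sub, Finset.sum_sub_distrib, ← Finset.sum_mul, ← pow_two, h1, h2, sub_self,
    lt_irrefl] at hsum

lemma sq_dvd_of_sq_dvd_sum_pow_three {x y z : ℤ} (hval : ∀ i, f i = x ∨ f i = y ∨ f i = z)
    (hcard : (Fintype.card ι : ℤ) = q - 1) (h1 : ∑ i, f i = q) (h2 : ∑ i, f i ^ 2 = q ^ 2)
    (h3 : q ^ 2 ∣ ∑ i, f i ^ 3) :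
    q ^ 2 ∣ x * y * z * (q - 1) - q * (x * y + y * z + z * x) := by
  have hzero : ∑ i, (f i - x) * (f i - y) * (f i - z) = 0 := Finset.sum_eq_zero fun i _ => by
    rcases hval i with h | h | h <;> simp [h]
  rw [sum_sub_mul_sub_mul_sub, h1, h2, hcard] at hzero
  obtain ⟨m, hm⟩ := h3
  exact ⟨m - (x + y + z), by linear_combination hm - hzero⟩

lemma two_mul_pow_le_neg_mul {x y z : ℤ} (hp : p.Prime) (hx : ¬ (p : ℤ) ^ n ∣ x)
    (hy : ¬ (p : ℤ) ^ n ∣ y) (hz : ¬ (p : ℤ) ^ n ∣ z)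
    (h : ((p : ℤ) ^ n) ^ 2 ∣ x * y * z * (p ^ n - 1) - p ^ n * (x * y + y * z + z * x))
    (hxy : x * y < 0) : 2 * (p : ℤ) ^ n ≤ -(x * y) := by
  have hdvd := pow_succ_dvd_mul_of_sq_dvd (Nat.prime_iff_prime_int.1 hp) hx hy hz h
  calc 2 * (p : ℤ) ^ n ≤ p * p ^ n := by gcongr; exact_mod_cast hp.two_le
    _ = p ^ (n + 1) := (pow_succ' _ _).symm
    _ ≤ -(x * y) := Int.le_of_dvd (neg_pos.2 hxy) (dvd_neg.2 hdvd)

theorem exists_eq_zero_of_ncard_range_eq_three (hp : p.Prime)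
    (hcard : (Fintype.card ι : ℤ) = p ^ n - 1) (h1 : ∑ i, f i = p ^ n)
    (h2 : ∑ i, f i ^ 2 = (p ^ n) ^ 2) (h3 : ((p : ℤ) ^ n) ^ 2 ∣ ∑ i, f i ^ 3)
    (hf : (Set.range f).ncard = 3) : ∃ i, f i = 0 := by
  by_contra! hne
  obtain ⟨x, y, z, hxy, hyz, hrange⟩ := exists_range_eq_of_ncard_eq_three hf
  have hval (i : ι) : f i = x ∨ f i = y ∨ f i = z := by
    simpa [hrange] using Set.mem_range_self (f := f) i
  obtain ⟨i, rfl⟩ : x ∈ Set.range f := by simp [hrange]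
  obtain ⟨j, rfl⟩ : y ∈ Set.range f := by simp [hrange]
  obtain ⟨k, rfl⟩ : z ∈ Set.range f := by simp [hrange]
  have hq : (0 : ℤ) < p ^ n := pow_pos (mod_cast hp.pos) n
  have habs (l : ι) : |f l| < p ^ n := by
    by_cases hl : l = i
    · exact abs_lt_of_sum_sq_eq_sq hq.le h2 (by grind) (hne j)
    · exact abs_lt_of_sum_sq_eq_sq hq.le h2 hl (hne i)
  have hndvd (l : ι) : ¬ (p : ℤ) ^ n ∣ f l := fun h =>
    hne l (Int.eq_zero_of_abs_lt_dvd h (habs l))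
  have hcubic := sq_dvd_of_sq_dvd_sum_pow_three hval hcard h1 h2 h3
  rcases (hne j).lt_or_gt with hj | hj
  · have hk : 0 < f k := by
      by_contra! hk
      have : ∑ l, f l ≤ 0 := Finset.sum_nonpos fun l _ => by grind
      linarith
    have hgap := neg_mul_lt_of_adjacent hcard h1 h2 (y := f j) (z := f k)
      (fun l => by grind) hj hk (abs_lt.1 (habs j)).1
    refine hgap.not_ge <| two_mul_pow_le_neg_mul hp (hndvd j) (hndvd k) (hndvd i) ?_
      (mul_neg_of_neg_of_pos hj hk)
    convert hcubic using 1
    ring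
  · have hi : f i < 0 := by
      obtain ⟨l, hl⟩ := exists_neg_of_sum_sq_eq_sq (fun l => (abs_lt.1 (habs l)).2) h1 h2 (hne j)
      grind
    have hgap := neg_mul_lt_of_adjacent hcard h1 h2 (y := f i) (z := f j)
      (fun l => by grind) hi hj (abs_lt.1 (habs i)).1
    exact hgap.not_ge <| two_mul_pow_le_neg_mul hp (hndvd i) (hndvd j) (hndvd k) hcubic
      (mul_neg_of_neg_of_pos hi hj)

end IntegerValues

section ConjugateValues

variable {ι : Type*} [Fintype ι] {p n : ℕ}

lemma exists_cycle_type_of_ncard_eq_three {α : Type*} {s : Set α} (hs : s.ncard = 3) {g : α → α}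
    (hg : Set.MapsTo g s s) (hinj : Set.InjOn g s) :
    (∀ x ∈ s, g x = x) ∨
    (∃ a b c, s = {a, b, c} ∧ a ≠ b ∧ a ≠ c ∧ b ≠ c ∧ g a = a ∧ g b = c ∧ g c = b) ∨
    (∃ a b c, s = {a, b, c} ∧ g a = b ∧ g b = c ∧ g c = a) := by
  obtain ⟨a, b, c, hab, hac, hbc, rfl⟩ := Set.ncard_eq_three.1 hs
  have ha : g a = a ∨ g a = b ∨ g a = c := by simpa using hg (Set.mem_insert a _)
  have hb : g b = a ∨ g b = b ∨ g b = c := by simpa using hg (x := b) (by simp)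
  have hc : g c = a ∨ g c = b ∨ g c = c := by simpa using hg (x := c) (by simp)
  have hgab : g a ≠ g b := hinj.ne (by simp) (by simp) hab
  have hgac : g a ≠ g c := hinj.ne (by simp) (by simp) hac
  have hgbc : g b ≠ g c := hinj.ne (by simp) (by simp) hbc
  rcases ha with ha | ha | ha
  · rcases hb with hb | hb | hb
    · grind
    · exact .inl (by grind)
    · exact .inr (.inl ⟨a, b, c, by grind⟩)
  · rcases hb with hb | hb | hb
    · exact .inr (.inl ⟨c, a, b, by grind⟩)
    · grind
    · exact .inr (.inr ⟨a, b, c, by grind⟩)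
  · rcases hb with hb | hb | hb
    · exact .inr (.inr ⟨a, c, b, by grind⟩)
    · exact .inr (.inl ⟨b, a, c, by grind⟩)
    · grind

lemma sum_triple_le_sum {g : ι → ℤ} (hg : ∀ i, 0 ≤ g i) {i j k : ι} (hij : i ≠ j) (hik : i ≠ k)
    (hjk : j ≠ k) : g i + g j + g k ≤ ∑ i, g i := by
  calc g i + g j + g k = ∑ l ∈ {i, j, k}, g l := by
        rw [Finset.sum_insert (by simp [hij, hik]), Finset.sum_pair hjk, add_assoc]
    _ ≤ ∑ l, g l := Finset.sum_le_univ_sum_of_nonneg hg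

/- The hypotheses on the sums amount to `((q - 1) * m - q) * ((q - 1) * t - 2 * q) =
-q ^ 2 * (q - 3)` for `q = p ^ n`, so `q` divides `m` or `t`; but `2 * m ^ 2 + t ^ 2 ≤ q ^ 2`. -/
lemma eq_zero_of_two_values (hp : p.Prime) (hodd : Odd p) {g : ι → ℤ} {m t : ℤ}
    (hcard : (Fintype.card ι : ℤ) = p ^ n - 1) (h1 : ∑ i, g i = 2 * p ^ n)
    (h2 : ∑ i, g i ^ 2 = 2 * (p ^ n) ^ 2) (hval : ∀ i, g i = 2 * m ∨ g i = t)
    {i j k : ι} (hij : i ≠ j) (hik : i ≠ k) (hjk : j ≠ k)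
    (hi : g i = 2 * m) (hj : g j = t) (hk : g k = t) : m = 0 := by
  have hqodd : Odd ((p : ℤ) ^ n) := (Int.odd_coe_nat p |>.2 hodd).pow
  have hq : (0 : ℤ) < p ^ n := pow_pos (mod_cast hp.pos) n
  have hdvd {x y : ℤ} := pow_dvd_or_pow_dvd_of_sq_dvd_mul (x := x) (y := y) (n := n)
    (Nat.prime_iff_prime_int.1 hp)
  generalize (p : ℤ) ^ n = q at *
  have hsq : 2 * m ^ 2 + t ^ 2 ≤ q ^ 2 := by
    have := sum_triple_le_sum (fun i => sq_nonneg (g i)) hij hik hjk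
    rw [hi, hj, hk, h2] at this
    linarith
  have hprod : ∑ i, (g i - 2 * m) * (g i - t) = 0 := Finset.sum_eq_zero fun i _ => by
    rcases hval i with h | h <;> simp [h]
  rw [sum_sub_mul_sub, h1, h2, hcard] at hprod
  have hquad : q ^ 2 - (2 * m + t) * q + m * t * (q - 1) = 0 := by linarith
  by_contra hm
  have hm2 := sq_pos_of_ne_zero hm
  rcases hdvd (x := (q - 1) * m - q) (y := (q - 1) * t - 2 * q)
    ⟨-(q - 3), by linear_combination (q - 1) * hquad⟩ with ⟨r, hr⟩ | ⟨r, hr⟩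
  · have hqm : q ∣ m := ⟨m - 1 - r, by linear_combination -hr⟩
    exact hm (Int.eq_zero_of_abs_lt_dvd hqm (abs_lt_of_sq_lt_sq (by nlinarith) hq.le))
  · have hqt : q ∣ t := ⟨t - 2 - r, by linear_combination -hr⟩
    obtain rfl := Int.eq_zero_of_abs_lt_dvd hqt (abs_lt_of_sq_lt_sq (by nlinarith) hq.le)
    have hqm : q = 2 * m := mul_left_cancel₀ hq.ne' (by linarith)
    exact Int.not_even_iff_odd.2 hqodd (hqm ▸ even_two_mul m)

variable {L : Type*} [Field L] [CharZero L] {σ : L →+* L} {w : ι → L}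

/- When `σ` swaps two of the values, `w i + σ (w i)` is a rational integer taking two values. -/
lemma fixed_value_eq_zero_of_swap (hp : p.Prime) (hodd : Odd p)
    (hfix : ∀ x, IsIntegral ℤ x → σ x = x → ∃ m : ℤ, (m : L) = x)
    (hint : ∀ i, IsIntegral ℤ (w i)) (hcard : (Fintype.card ι : ℤ) = p ^ n - 1)
    (h1 : ∑ i, w i = p ^ n) (h2 : ∑ i, w i ^ 2 = (p ^ n) ^ 2)
    (hσ : ∑ i, w i * σ (w i) = 0) {i j k : ι}
    (hval : ∀ l, w l = w i ∨ w l = w j ∨ w l = w k) (hij : w i ≠ w j) (hik : w i ≠ w k)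
    (hjk : w j ≠ w k) (hi : σ (w i) = w i) (hj : σ (w j) = w k) (hk : σ (w k) = w j) :
    w i = 0 := by
  have hg (l : ι) : ∃ m : ℤ, (m : L) = w l + σ (w l) :=
    hfix _ ((hint l).add (map_isIntegral_int σ (hint l))) <| by
      rcases hval l with h | h | h <;> simp [h, hi, hj, hk, add_comm]
  choose g hg using hg
  obtain ⟨m, hm⟩ := hfix _ (hint i) hi
  have hσ1 : ∑ l, σ (w l) = p ^ n := by simpa using congrArg σ h1
  have hσ2 : ∑ l, σ (w l) ^ 2 = (p ^ n) ^ 2 := by simpa using congrArg σ h2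
  have hg1 : ∑ l, (g l : L) = 2 * p ^ n := by
    simp only [hg, Finset.sum_add_distrib, h1, hσ1, two_mul]
  have hg2 : ∑ l, (g l : L) ^ 2 = 2 * (p ^ n) ^ 2 := by
    simp only [hg, add_sq, mul_assoc, Finset.sum_add_distrib, ← Finset.mul_sum, h2, hσ, hσ2]
    ring
  have hcongr {l l' : ι} (h : w l + σ (w l) = w l' + σ (w l')) : g l = g l' :=
    Int.cast_injective (α := L) (by rw [hg, hg, h])
  have hgi : g i = 2 * m := Int.cast_injective (α := L) (by push_cast; rw [hg, hi, hm, two_mul])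
  have hgk : g k = g j := hcongr (by rw [hj, hk, add_comm])
  have hgval (l : ι) : g l = 2 * m ∨ g l = g j := by
    rcases hval l with h | h | h
    · exact .inl ((hcongr (by rw [h])).trans hgi)
    · exact .inr (hcongr (by rw [h]))
    · exact .inr ((hcongr (by rw [h])).trans hgk)
  have hm0 : m = 0 := eq_zero_of_two_values hp hodd hcard (by exact_mod_cast hg1)
    (by exact_mod_cast hg2) hgval (ne_of_apply_ne w hij) (ne_of_apply_ne w hik)
    (ne_of_apply_ne w hjk) hgi rfl hgk
  rw [← hm, hm0, Int.cast_zero]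

/- Once the fixed value vanishes, `w l * σ (w l)` is proportional to `w l + σ (w l)`, whose sum is
`2 * p ^ n`. -/
lemma sum_mul_map_ne_zero_of_swap (hp : p ≠ 0) (h1 : ∑ i, w i = p ^ n) {i j k : ι}
    (hval : ∀ l, w l = w i ∨ w l = w j ∨ w l = w k) (hij : w i ≠ w j) (hik : w i ≠ w k)
    (hi : w i = 0) (hj : σ (w j) = w k) (hk : σ (w k) = w j) : ∑ l, w l * σ (w l) ≠ 0 := by
  intro hσ
  have hσ1 : ∑ l, σ (w l) = p ^ n := by simpa using congrArg σ h1
  have hterm (l : ι) : (w j + w k) * (w l * σ (w l)) = w j * w k * (w l + σ (w l)) := by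
    rcases hval l with h | h | h <;> rw [h]
    · simp [hi]
    · rw [hj]; ring
    · rw [hk]; ring
  have hsum : (w j + w k) * ∑ l, w l * σ (w l) = w j * w k * (2 * p ^ n) := by
    rw [two_mul]
    nth_rw 1 [← h1]
    rw [← hσ1, ← Finset.sum_add_distrib, Finset.mul_sum, Finset.mul_sum]
    exact Finset.sum_congr rfl fun l _ => hterm l
  have hp0 : (p : L) ^ n ≠ 0 := pow_ne_zero _ (mod_cast hp)
  rw [hσ, mul_zero] at hsum
  exact mul_ne_zero (mul_ne_zero (hi ▸ hij.symm) (hi ▸ hik.symm))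
    (mul_ne_zero two_ne_zero hp0) hsum.symm

/- All the sums `w l + σ (w l) + σ (σ (w l))` have the same value `s`, so that
`3 * p ^ n = (p ^ n - 1) * s`, which is impossible modulo `2`. -/
lemma not_three_cycle (hodd : Odd p)
    (hfix : ∀ x, IsIntegral ℤ x → σ x = x → ∃ m : ℤ, (m : L) = x)
    (hint : ∀ i, IsIntegral ℤ (w i)) (hcard : (Fintype.card ι : ℤ) = p ^ n - 1)
    (h1 : ∑ i, w i = p ^ n) {i j k : ι}
    (hval : ∀ l, w l = w i ∨ w l = w j ∨ w l = w k)
    (hi : σ (w i) = w j) (hj : σ (w j) = w k) : σ (w k) ≠ w i := by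
  intro hk
  obtain ⟨s, hs⟩ := hfix _ (((hint i).add (hint j)).add (hint k)) (by
    simp only [map_add, hi, hj, hk]; ring)
  have htrace (l : ι) : w l + σ (w l) + σ (σ (w l)) = s := by
    rcases hval l with h | h | h <;> rw [hs, h] <;> simp only [hi, hj, hk] <;> ring
  have hσ1 : ∑ l, σ (w l) = p ^ n := by simpa using congrArg σ h1
  have hσσ1 : ∑ l, σ (σ (w l)) = p ^ n := by simpa using congrArg σ hσ1
  have hcard' : (Fintype.card ι : L) = p ^ n - 1 := by
    exact_mod_cast congrArg (Int.cast (R := L)) hcard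
  have hsum : 3 * (p : L) ^ n = (p ^ n - 1) * s := by
    calc 3 * (p : L) ^ n = ∑ l, (w l + σ (w l) + σ (σ (w l))) := by
          rw [Finset.sum_add_distrib, Finset.sum_add_distrib, h1, hσ1, hσσ1]; ring
      _ = (p ^ n - 1) * s := by simp [htrace, hcard']
  have hsumInt : 3 * (p : ℤ) ^ n = (p ^ n - 1) * s := by exact_mod_cast hsum
  have hqodd : Odd ((p : ℤ) ^ n) := (Int.odd_coe_nat p |>.2 hodd).pow
  have heven : Even (3 * (p : ℤ) ^ n) := hsumInt ▸ (hqodd.sub_odd odd_one).mul_right s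
  exact Int.not_even_iff_odd.2 (Odd.mul (by decide) hqodd) heven

theorem sum_mul_map_ne_zero (hp : p.Prime) (hodd : Odd p)
    (hfix : ∀ x, IsIntegral ℤ x → σ x = x → ∃ m : ℤ, (m : L) = x)
    (hint : ∀ i, IsIntegral ℤ (w i)) (hcard : (Fintype.card ι : ℤ) = p ^ n - 1)
    (h1 : ∑ i, w i = p ^ n) (h2 : ∑ i, w i ^ 2 = (p ^ n) ^ 2)
    (hw : (Set.range w).ncard = 3) (hσ : Set.MapsTo σ (Set.range w) (Set.range w)) :
    ∑ i, w i * σ (w i) ≠ 0 := by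
  obtain hid | ⟨a, b, c, hrange, hab, hac, hbc, ha, hb, hc⟩ | ⟨a, b, c, hrange, ha, hb, hc⟩ :=
    exists_cycle_type_of_ncard_eq_three hw hσ σ.injective.injOn
  · simp only [hid _ (Set.mem_range_self _), ← pow_two, h2]
    exact pow_ne_zero _ (pow_ne_zero _ (mod_cast hp.ne_zero))
  all_goals
    have hval (l : ι) : w l = a ∨ w l = b ∨ w l = c := by
      simpa [hrange] using Set.mem_range_self (f := w) l
    obtain ⟨i, rfl⟩ : a ∈ Set.range w := by simp [hrange]
    obtain ⟨j, rfl⟩ : b ∈ Set.range w := by simp [hrange]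
    obtain ⟨k, rfl⟩ : c ∈ Set.range w := by simp [hrange]
  · intro hsum
    have hwi := fixed_value_eq_zero_of_swap hp hodd hfix hint hcard h1 h2 hsum hval hab hac hbc
      ha hb hc
    exact sum_mul_map_ne_zero_of_swap hp.ne_zero h1 hval hab hac hwi hb hc hsum
  · exact (not_three_cycle hodd hfix hint hcard h1 hval ha hb hc).elim

end ConjugateValues

section CharTransform

variable {R S : Type*} [CommRing R] [Fintype R] [CommRing S] {ψ : AddChar R S}

/-- The unnormalised Fourier transform `a ↦ ∑ x, f x * ψ (a * x)` on a finite ring, with respect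
to a fixed additive character `ψ`. -/
def charTransform (ψ : AddChar R S) (f : R → S) (a : R) : S :=
  ∑ x, f x * ψ (a * x)

lemma sum_charTransform [IsDomain S] (hψ : ψ.IsPrimitive) (f : R → S) :
    ∑ a, charTransform ψ f a = Fintype.card R * f 0 := by
  simp only [charTransform]
  rw [Finset.sum_comm]
  simp [← Finset.mul_sum, AddChar.sum_mulShift _ hψ, mul_comm (f 0)]

lemma charTransform_mul_charTransform (f g : R → S) (a : R) :
    charTransform ψ f a * charTransform ψ g a =
      charTransform ψ (fun s => ∑ x, f x * g (s - x)) a := by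
  calc charTransform ψ f a * charTransform ψ g a
      = ∑ x, ∑ y, f x * ψ (a * x) * (g y * ψ (a * y)) := Finset.sum_mul_sum ..
    _ = ∑ x, ∑ s, f x * g (s - x) * ψ (a * s) :=
        Finset.sum_congr rfl fun x _ => Fintype.sum_equiv (Equiv.addLeft x) _ _ fun y => by
          rw [Equiv.coe_addLeft, add_sub_cancel_left, mul_add, AddChar.map_add_eq_mul]
          ring
    _ = charTransform ψ (fun s => ∑ x, f x * g (s - x)) a := by
        rw [Finset.sum_comm]
        simp only [charTransform, Finset.sum_mul]

lemma sum_charTransform_mul_charTransform [IsDomain S] (hψ : ψ.IsPrimitive) (f g : R → S) :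
    ∑ a, charTransform ψ f a * charTransform ψ g a = Fintype.card R * ∑ x, f x * g (-x) := by
  simp only [charTransform_mul_charTransform, sum_charTransform hψ, zero_sub]

lemma charTransform_units_mul (f : R → S) (b : Rˣ) (a : R) :
    charTransform ψ f (b * a) = charTransform ψ (fun x => f (↑b⁻¹ * x)) a := by
  refine Fintype.sum_equiv b.mulLeft _ _ fun x => ?_
  simp only [Units.mulLeft_apply, Units.inv_mul_cancel_left]
  rw [mul_left_comm, mul_assoc]

end CharTransform

lemma isIntegral_addChar {A R : Type*} [AddGroup A] [Finite A] [CommRing R] (ψ : AddChar A R)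
    (x : A) : IsIntegral ℤ (ψ x) := by
  refine .of_pow (Nat.card_pos (α := A)) ?_
  rw [← AddChar.map_nsmul_eq_pow, card_nsmul_eq_zero', AddChar.map_zero_eq_one]
  exact isIntegral_one

lemma sum_units_of_map_zero {G M : Type*} [GroupWithZero G] [Fintype G] [AddCommMonoid M]
    {f : G → M} (hf : f 0 = 0) : ∑ u : Gˣ, f u = ∑ a, f a := by
  refine Finset.sum_of_injOn Units.val Units.val_injective.injOn (fun _ _ => Finset.mem_univ _)
    (fun a _ ha => ?_) fun _ _ => rfl
  rcases eq_or_ne a 0 with rfl | h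
  · exact hf
  · exact absurd ⟨Units.mk0 a h, by simp⟩ ha

lemma mulEquiv_map_neg {R : Type*} [Ring R] [NoZeroDivisors R] (φ : R ≃* R) (x : R) :
    φ (-x) = -φ x := by
  have hsq : φ (-1) * φ (-1) = 1 := by rw [← map_mul, neg_one_mul, neg_neg, map_one]
  have hneg : φ (-1) = -1 := by
    rcases mul_self_eq_one_iff.1 hsq with h | h
    · have h1 : (-1 : R) = 1 := φ.injective (h.trans (map_one φ).symm)
      rw [h, h1]
    · exact h
  rw [← neg_one_mul, map_mul, hneg, neg_one_mul]

section TwistedWeilSum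

variable {K S : Type*} [Field K] [Fintype K] [CommRing S] {ψ : AddChar K S} {φ : K ≃* K}

/-- The Weil sum `∑ x, ψ (φ x + a * x)` attached to a multiplicative automorphism `φ` of a finite
field; the sums `W_{K,d}(a)` are the case `φ x = x ^ d`. -/
def twistedWeilSum (ψ : AddChar K S) (φ : K ≃* K) (a : K) : S :=
  ∑ x, ψ (φ x + a * x)

lemma twistedWeilSum_eq_charTransform :
    twistedWeilSum ψ φ = charTransform ψ (fun x => ψ (φ x)) := by
  ext a
  simp only [twistedWeilSum, charTransform, AddChar.map_add_eq_mul]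

lemma isIntegral_twistedWeilSum (ψ : AddChar K S) (φ : K ≃* K) (a : K) :
    IsIntegral ℤ (twistedWeilSum ψ φ a) :=
  .sum _ fun _ _ => isIntegral_addChar ψ _

lemma map_twistedWeilSum {σ : S →+* S} {t : Kˣ} (hσ : ∀ x, σ (ψ x) = ψ (t * x)) (a : K) :
    σ (twistedWeilSum ψ φ a) =
      twistedWeilSum ψ φ ((t / Units.mapEquiv φ.symm t : Kˣ) * a) := by
  simp only [twistedWeilSum, map_sum, hσ]
  refine Fintype.sum_equiv (Units.mapEquiv φ.symm t).mulLeft _ _ fun x => ?_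
  simp only [Units.mulLeft_apply, Units.coe_mapEquiv, Units.val_div_eq_div_val, map_mul φ, mul_add,
    MulEquiv.apply_symm_apply]
  congr 2
  have : φ.symm (t : K) ≠ 0 := by simp
  field_simp

variable [IsDomain S]

lemma sum_map_mul (hψ : ψ.IsPrimitive) (φ : K ≃* K) (b : K) :
    ∑ x, ψ (φ x * b) = if b = 0 then (Fintype.card K : S) else 0 := by
  refine (φ.toEquiv.sum_comp fun x => ψ (x * b)).trans ?_
  rw [AddChar.sum_mulShift b hψ, Nat.cast_ite, Nat.cast_zero]

lemma twistedWeilSum_zero (hψ : ψ.IsPrimitive) : twistedWeilSum ψ φ 0 = 0 := by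
  simpa [twistedWeilSum] using sum_map_mul hψ φ 1

lemma sum_twistedWeilSum (hψ : ψ.IsPrimitive) :
    ∑ a, twistedWeilSum ψ φ a = Fintype.card K := by
  simp [twistedWeilSum_eq_charTransform, sum_charTransform hψ]

lemma sum_twistedWeilSum_mul_twistedWeilSum (hψ : ψ.IsPrimitive) (b : Kˣ) :
    ∑ a, twistedWeilSum ψ φ a * twistedWeilSum ψ φ (b * a) =
      if b = 1 then (Fintype.card K : S) ^ 2 else 0 := by
  have hterm (x : K) : ψ (φ x) * ψ (φ (↑b⁻¹ * -x)) = ψ (φ x * (1 - φ ↑b⁻¹)) := by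
    rw [← AddChar.map_add_eq_mul, map_mul, mulEquiv_map_neg]
    ring_nf
  have hb1 : 1 - φ ↑b⁻¹ = 0 ↔ b = 1 := by
    rw [sub_eq_zero, eq_comm, map_eq_one_iff φ φ.injective, Units.val_eq_one, inv_eq_one]
  simp only [twistedWeilSum_eq_charTransform, charTransform_units_mul _ b,
    sum_charTransform_mul_charTransform hψ, hterm, sum_map_mul hψ, hb1]
  split_ifs <;> ring

lemma sum_twistedWeilSum_pow_three (hψ : ψ.IsPrimitive) :
    ∑ a, twistedWeilSum ψ φ a ^ 3 =
      (Fintype.card K : S) ^ 2 * Fintype.card {u : K // φ u + φ (-1 - u) + 1 = 0} := by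
  have hscale (y : K) : ∑ x, ψ (φ y) * (ψ (φ x) * ψ (φ (-y - x))) =
      ∑ u, ψ (φ y * (φ u + φ (-1 - u) + 1)) := by
    rcases eq_or_ne y 0 with rfl | hy
    · simp [mulEquiv_map_neg, ← AddChar.map_add_eq_mul]
    · refine (Fintype.sum_equiv (Equiv.mulLeft₀ y hy) _ _ fun u => ?_).symm
      rw [Equiv.mulLeft₀_apply, show -y - y * u = y * (-1 - u) by ring, map_mul φ, map_mul φ,
        ← AddChar.map_add_eq_mul, ← AddChar.map_add_eq_mul]
      ring_nf
  let f (x : K) : S := ψ (φ x)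
  calc ∑ a, twistedWeilSum ψ φ a ^ 3
      = ∑ a, charTransform ψ f a * charTransform ψ (fun s => ∑ x, f x * f (s - x)) a := by
        simp only [twistedWeilSum_eq_charTransform, ← charTransform_mul_charTransform, pow_three]
        rfl
    _ = Fintype.card K * ∑ u, ∑ y, ψ (φ y * (φ u + φ (-1 - u) + 1)) := by
        rw [sum_charTransform_mul_charTransform hψ, Finset.sum_comm]
        simp only [Finset.mul_sum, ← hscale, f]
    _ = (Fintype.card K : S) ^ 2 * Fintype.card {u : K // φ u + φ (-1 - u) + 1 = 0} := by
        simp only [sum_map_mul hψ, ← Finset.sum_filter, Finset.sum_const, nsmul_eq_mul,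
          Fintype.card_subtype]
        ring

lemma sum_units_twistedWeilSum (hψ : ψ.IsPrimitive) :
    ∑ u : Kˣ, twistedWeilSum ψ φ u = Fintype.card K := by
  rw [sum_units_of_map_zero (twistedWeilSum_zero hψ), sum_twistedWeilSum hψ]

lemma sum_units_twistedWeilSum_mul_twistedWeilSum (hψ : ψ.IsPrimitive) (b : Kˣ) :
    ∑ u : Kˣ, twistedWeilSum ψ φ u * twistedWeilSum ψ φ (b * u) =
      if b = 1 then (Fintype.card K : S) ^ 2 else 0 := by
  rw [← sum_twistedWeilSum_mul_twistedWeilSum hψ b]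
  exact sum_units_of_map_zero (f := fun a => twistedWeilSum ψ φ a * twistedWeilSum ψ φ (b * a))
    (by rw [twistedWeilSum_zero hψ, zero_mul])

lemma sum_units_twistedWeilSum_sq (hψ : ψ.IsPrimitive) :
    ∑ u : Kˣ, twistedWeilSum ψ φ u ^ 2 = (Fintype.card K : S) ^ 2 := by
  simpa [← pow_two] using sum_units_twistedWeilSum_mul_twistedWeilSum hψ (φ := φ) 1

lemma sum_units_twistedWeilSum_pow_three (hψ : ψ.IsPrimitive) :
    ∑ u : Kˣ, twistedWeilSum ψ φ u ^ 3 =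
      (Fintype.card K : S) ^ 2 * Fintype.card {u : K // φ u + φ (-1 - u) + 1 = 0} := by
  rw [← sum_twistedWeilSum_pow_three hψ]
  exact sum_units_of_map_zero (f := fun a => twistedWeilSum ψ φ a ^ 3)
    (by rw [twistedWeilSum_zero hψ, zero_pow three_ne_zero])

end TwistedWeilSum

section ThreeValued

variable {K L : Type*} [Field K] [Fintype K] [Field L] {ψ : AddChar K L} {φ : K ≃* K}
  {p n : ℕ}

lemma exists_int_eq_twistedWeilSum {σ : L →+* L} {t : Kˣ} (hσ : ∀ x, σ (ψ x) = ψ (t * x))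
    (hfix : ∀ x, IsIntegral ℤ x → σ x = x → ∃ m : ℤ, (m : L) = x)
    (hφ : Units.mapEquiv φ t = t) (a : K) : ∃ m : ℤ, (m : L) = twistedWeilSum ψ φ a := by
  refine hfix _ (isIntegral_twistedWeilSum ψ φ a) ?_
  have hφ' : Units.mapEquiv φ.symm t = t := (Units.mapEquiv φ).symm_apply_eq.2 hφ.symm
  rw [map_twistedWeilSum hσ, hφ', div_self', Units.val_one, one_mul]

lemma cast_card_units (hq : Fintype.card K = p ^ n) : (Fintype.card Kˣ : ℤ) = p ^ n - 1 := by
  rw [Fintype.card_units, hq, Nat.cast_pred (hq ▸ Fintype.card_pos), Nat.cast_pow]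

variable [CharZero L]

/- The conjugates of a Weil sum are again Weil sums, `σ (W u) = W (c * u)` with
`c = t / φ.symm t`, so `∑ u, W u * σ (W u)` is an autocorrelation and vanishes unless `c = 1`. -/
theorem map_eq_self_of_ncard_range_twistedWeilSum (hp : p.Prime) (hψ : ψ.IsPrimitive)
    (hq : Fintype.card K = p ^ n) {σ : L →+* L} {t : Kˣ} (hσ : ∀ x, σ (ψ x) = ψ (t * x))
    (ht : p = 2 → t = 1) (hfix : ∀ x, IsIntegral ℤ x → σ x = x → ∃ m : ℤ, (m : L) = x)
    (h3 : (Set.range fun u : Kˣ => twistedWeilSum ψ φ u).ncard = 3) :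
    Units.mapEquiv φ t = t := by
  by_contra hne
  have hc : t / Units.mapEquiv φ.symm t ≠ 1 := fun h =>
    hne (((Units.mapEquiv φ).symm_apply_eq.1 (div_eq_one.1 h).symm).symm)
  have hodd : Odd p := hp.odd_of_ne_two fun h2 => hne (by rw [ht h2, map_one])
  have hq' : (Fintype.card K : L) = p ^ n := by rw [hq, Nat.cast_pow]
  refine sum_mul_map_ne_zero hp hodd hfix (w := fun u : Kˣ => twistedWeilSum ψ φ u)
    (fun u => isIntegral_twistedWeilSum ψ φ u) (cast_card_units hq)
    ((sum_units_twistedWeilSum hψ).trans hq') ((sum_units_twistedWeilSum_sq hψ).trans (by rw [hq']))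
    h3 ?_ ?_
  · rintro _ ⟨u, rfl⟩
    exact ⟨t / Units.mapEquiv φ.symm t * u, by
      simp only [map_twistedWeilSum hσ, Units.val_mul]⟩
  · simp only [map_twistedWeilSum hσ, sum_units_twistedWeilSum_mul_twistedWeilSum hψ, if_neg hc]

theorem exists_twistedWeilSum_eq_zero (hp : p.Prime) (hψ : ψ.IsPrimitive)
    (hq : Fintype.card K = p ^ n) (hint : ∀ u : Kˣ, ∃ m : ℤ, (m : L) = twistedWeilSum ψ φ u)
    (h3 : (Set.range fun u : Kˣ => twistedWeilSum ψ φ u).ncard = 3) :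
    ∃ u : Kˣ, twistedWeilSum ψ φ u = 0 := by
  choose f hf using hint
  have hq' : (Fintype.card K : L) = p ^ n := by rw [hq, Nat.cast_pow]
  have h1 := sum_units_twistedWeilSum (φ := φ) hψ
  have h2 := sum_units_twistedWeilSum_sq (φ := φ) hψ
  obtain ⟨N, h3'⟩ : ∃ N : ℕ, ∑ u : Kˣ, twistedWeilSum ψ φ u ^ 3 = (Fintype.card K : L) ^ 2 * N :=
    ⟨_, sum_units_twistedWeilSum_pow_three hψ⟩
  simp only [← hf, hq'] at h1 h2 h3'
  have hrange : (Set.range fun u : Kˣ => twistedWeilSum ψ φ u) = Int.cast '' Set.range f := by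
    rw [← Set.range_comp]
    exact congrArg Set.range (funext fun u => (hf u).symm)
  rw [hrange, Set.ncard_image_of_injective _ Int.cast_injective] at h3
  obtain ⟨u, hu⟩ := exists_eq_zero_of_ncard_range_eq_three hp (cast_card_units hq)
    (by exact_mod_cast h1) (by exact_mod_cast h2) ⟨N, by exact_mod_cast h3'⟩ h3
  exact ⟨u, by rw [← hf, hu, Int.cast_zero]⟩

end ThreeValued

section Cyclotomic

lemma exists_int_eq_of_isIntegral_of_apply_eq {L : Type*} [Field L] [CharZero L] [IsGalois ℚ L]
    {τ : L ≃ₐ[ℚ] L} (hτ : ∀ g, g ∈ Subgroup.zpowers τ) {x : L} (hx : IsIntegral ℤ x)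
    (hτx : τ x = x) : ∃ m : ℤ, (m : L) = x := by
  have hstab : Subgroup.zpowers τ ≤ MulAction.stabilizer (L ≃ₐ[ℚ] L) x :=
    Subgroup.zpowers_le.2 hτx
  obtain ⟨r, rfl⟩ := (InfiniteGalois.mem_range_algebraMap_iff_fixed (k := ℚ) x).2
    fun g => hstab (hτ g)
  obtain ⟨m, rfl⟩ := IsIntegrallyClosed.isIntegral_iff.1
    ((isIntegral_algebraMap_iff (algebraMap ℚ L).injective).1 hx)
  exact ⟨m, by simp⟩

theorem exists_generator_galois_of_isPrimitiveRoot {L : Type*} [Field L] [NumberField L] {p : ℕ}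
    [Fact p.Prime] [IsCyclotomicExtension {p} ℚ L] {z : L} (hz : IsPrimitiveRoot z p) :
    ∃ (σ : L →+* L) (j : (ZMod p)ˣ), (∀ x, x ∈ Subgroup.zpowers j) ∧
      σ z = z ^ (j : ZMod p).val ∧ ∀ x, IsIntegral ℤ x → σ x = x → ∃ m : ℤ, (m : L) = x := by
  have : IsGalois ℚ L := IsCyclotomicExtension.isGalois {p} ℚ L
  obtain ⟨j, hj⟩ := IsCyclic.exists_generator (α := (ZMod p)ˣ)
  let e := IsCyclotomicExtension.Rat.galEquivZMod p L
  have hgen (g : L ≃ₐ[ℚ] L) : g ∈ Subgroup.zpowers (e.symm j) := by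
    obtain ⟨k, hk⟩ := Subgroup.mem_zpowers_iff.1 (hj (e g))
    exact ⟨k, by simp only [← map_zpow, hk, e.symm_apply_apply]⟩
  refine ⟨(e.symm j : L →+* L), j, hj, ?_, fun x => exists_int_eq_of_isIntegral_of_apply_eq hgen⟩
  have := IsCyclotomicExtension.Rat.galEquivZMod_apply_of_pow_eq p L (e.symm j) hz.pow_eq_one
  rwa [e.apply_symm_apply] at this

open IntermediateField in
lemma exists_cyclotomic_field (p : ℕ) [Fact p.Prime] :
    ∃ (L : Type) (_ : Field L) (_ : CharZero L) (ι : L →+* ℂ) (z : L), IsPrimitiveRoot z p ∧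
      ι z = Complex.exp (2 * Real.pi * Complex.I / p) ∧
      ∃ (σ : L →+* L) (j : (ZMod p)ˣ), (∀ x, x ∈ Subgroup.zpowers j) ∧
        σ z = z ^ (j : ZMod p).val ∧ ∀ x, IsIntegral ℤ x → σ x = x → ∃ m : ℤ, (m : L) = x := by
  have hζ := Complex.isPrimitiveRoot_exp p (Fact.out : p.Prime).ne_zero
  generalize Complex.exp (2 * Real.pi * Complex.I / p) = ζ at hζ ⊢
  have : IsCyclotomicExtension {p} ℚ ℚ⟮ζ⟯ :=
    (IntermediateField.isCyclotomicExtension_singleton_iff_eq_adjoin p ℚ ℂ ℚ⟮ζ⟯ hζ).2 rfl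
  have := IsCyclotomicExtension.numberField {p} ℚ ℚ⟮ζ⟯
  have hz : IsPrimitiveRoot (AdjoinSimple.gen ℚ ζ) p := IsPrimitiveRoot.coe_submonoidClass_iff.1 hζ
  exact ⟨ℚ⟮ζ⟯, inferInstance, inferInstance, algebraMap ℚ⟮ζ⟯ ℂ, AdjoinSimple.gen ℚ ζ, hz, rfl,
    exists_generator_galois_of_isPrimitiveRoot hz⟩

end Cyclotomic

section TraceChar

variable {p : ℕ} [Fact p.Prime] (K : Type*) [Field K] [Algebra (ZMod p) K]
  {S : Type*} [CommRing S] {z : S}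

/-- The additive character `x ↦ z ^ Tr x` of an extension `K` of `ZMod p`, for a `p`-th root of
unity `z`. -/
noncomputable def traceChar (hz : z ^ p = 1) : AddChar K S :=
  (AddChar.zmodChar p hz).compAddMonoidHom (Algebra.trace (ZMod p) K).toAddMonoidHom

variable {K}

lemma traceChar_apply (hz : z ^ p = 1) (x : K) :
    traceChar K hz x = z ^ (Algebra.trace (ZMod p) K x).val :=
  AddChar.zmodChar_apply hz _

lemma traceChar_isPrimitive [Finite K] (hz : IsPrimitiveRoot z p) :
    (traceChar K hz.pow_eq_one).IsPrimitive := by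
  refine AddChar.IsPrimitive.of_ne_one fun h => ?_
  obtain ⟨x, hx⟩ := Algebra.trace_surjective (ZMod p) K 1
  have h1 : traceChar K hz.pow_eq_one x = 1 := DFunLike.congr_fun h x
  rw [traceChar_apply, hx, ZMod.val_one, pow_one] at h1
  exact hz.ne_one (Fact.out : p.Prime).one_lt h1

lemma map_traceChar (hz : z ^ p = 1) {σ : S →+* S} {j : ZMod p} (hσ : σ z = z ^ j.val) (x : K) :
    σ (traceChar K hz x) = traceChar K hz (algebraMap (ZMod p) K j * x) := by
  rw [← Algebra.smul_def, traceChar_apply, traceChar_apply, map_smul, smul_eq_mul, ZMod.val_mul,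
    ← pow_eq_pow_mod _ hz, map_pow, hσ, pow_mul]

end TraceChar

section PowerMap

lemma eq_one_of_zpow_eq_one_of_gcd_card_eq_one {G : Type*} [Group G] [Fintype G] {d : ℤ}
    (hd : Int.gcd d (Fintype.card G) = 1) {g : G} (hg : g ^ d = 1) : g = 1 := by
  have hdvd := Int.dvd_coe_gcd (orderOf_dvd_iff_zpow_eq_one.2 hg)
    (Int.natCast_dvd_natCast.2 (orderOf_dvd_card (x := g)))
  rw [hd, Int.natCast_dvd_natCast, Nat.dvd_one] at hdvd
  exact orderOf_eq_one_iff.1 hdvd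

lemma exists_mulEquiv_zpow {K : Type*} [Field K] [Fintype K] {d : ℤ} (hd0 : d ≠ 0)
    (hd : Int.gcd d ((Fintype.card K : ℤ) - 1) = 1) : ∃ φ : K ≃* K, ∀ x, φ x = x ^ d := by
  have hd' : Int.gcd d (Fintype.card Kˣ) = 1 := by
    rwa [Fintype.card_units, Nat.cast_pred Fintype.card_pos]
  have hinj : Function.Injective (zpowGroupHom d : K →* K) := fun x y hxy => by
    simp only [zpowGroupHom_apply] at hxy
    rcases eq_or_ne y 0 with rfl | hy
    · rwa [zero_zpow d hd0, zpow_eq_zero_iff hd0] at hxy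
    · have hx : x ≠ 0 := by
        rintro rfl
        exact zpow_ne_zero d hy (hxy ▸ zero_zpow d hd0)
      have hxy' : Units.mk0 x hx ^ d = Units.mk0 y hy ^ d := Units.ext (by simpa using hxy)
      have hdiv : Units.mk0 x hx / Units.mk0 y hy = 1 :=
        eq_one_of_zpow_eq_one_of_gcd_card_eq_one hd' (by rw [div_zpow, hxy', div_self'])
      exact congrArg Units.val (div_eq_one.1 hdiv)
  exact ⟨.ofBijective (zpowGroupHom d) (Finite.injective_iff_bijective.1 hinj), fun _ => rfl⟩

lemma modEq_one_of_algebraMap_zpow_eq_self {p : ℕ} [Fact p.Prime] {K : Type*} [Field K]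
    [Algebra (ZMod p) K] {d : ℤ} {j : (ZMod p)ˣ} (hj : ∀ x, x ∈ Subgroup.zpowers j)
    (h : algebraMap (ZMod p) K j ^ d = algebraMap (ZMod p) K j) : d ≡ 1 [ZMOD (p : ℤ) - 1] := by
  have hjd : j ^ d = j := Units.ext <| (algebraMap (ZMod p) K).injective <| by
    rwa [Units.val_zpow_eq_zpow_val, map_zpow₀]
  rw [← Nat.cast_pred (Fact.out : p.Prime).pos, ← ZMod.card_units p, ← Nat.card_eq_fintype_card,
    ← orderOf_eq_card_of_forall_mem_zpowers hj, ← zpow_eq_zpow_iff_modEq, hjd, zpow_one]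

end PowerMap

section WeilSum

variable {p : ℕ} [Fact p.Prime] {K : Type} [Field K] [Fintype K] [Algebra (ZMod p) K] {d : ℤ}

lemma weilValues_eq_range : weilValues p K d = Set.range fun u : Kˣ => weilSum p K d u := by
  ext w
  exact ⟨fun ⟨a, ha, hw⟩ => ⟨Units.mk0 a ha, hw⟩, fun ⟨u, hu⟩ => ⟨u, u.ne_zero, hu⟩⟩

lemma ne_zero_of_one_lt_ncard_weilValues (hd : Int.gcd d ((Fintype.card K : ℤ) - 1) = 1)
    (h : 1 < (weilValues p K d).ncard) : d ≠ 0 := by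
  rintro rfl
  have hcard : Fintype.card Kˣ ≤ 1 := by
    have := Fintype.card_pos (α := K)
    rw [Int.gcd_zero_left] at hd
    rw [Fintype.card_units]
    omega
  have := Fintype.card_le_one_iff_subsingleton.1 hcard
  rw [weilValues_eq_range] at h
  exact h.not_ge (Set.ncard_le_one_iff_subsingleton.2 (Set.subsingleton_range _))

lemma weilSum_eq_map_twistedWeilSum {S : Type*} [CommRing S] {z : S} (hz : z ^ p = 1)
    {ι : S →+* ℂ} (hι : ι z = Complex.exp (2 * Real.pi * Complex.I / p)) {φ : K ≃* K}
    (hφ : ∀ x, φ x = x ^ d) (a : K) :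
    weilSum p K d a = ι (twistedWeilSum (traceChar K hz) φ a) := by
  simp only [weilSum, twistedWeilSum, map_sum, canonicalAddChar, traceChar_apply, map_pow, hι, hφ,
    ← Complex.exp_nat_mul]
  exact Finset.sum_congr rfl fun x _ => congrArg Complex.exp (by ring)

lemma ncard_weilValues_eq_ncard_range {S : Type*} [Field S] {ι : S →+* ℂ} {f : K → S}
    (hf : ∀ a, weilSum p K d a = ι (f a)) :
    (weilValues p K d).ncard = (Set.range fun u : Kˣ => f u).ncard := by
  simp only [weilValues_eq_range, hf]
  rw [Set.range_comp' ι, Set.ncard_image_of_injective _ ι.injective]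

end WeilSum

theorem stmt1 (p : ℕ) [Fact p.Prime] (K : Type) [Field K] [Fintype K] [CharP K p]
    [Algebra (ZMod p) K]
    (d : ℤ) (hd : Int.gcd d ((Fintype.card K : ℤ) - 1) = 1)
    (h3 : (weilValues p K d).ncard = 3) :
    d ≡ 1 [ZMOD (p : ℤ) - 1] ∧
    (∀ a : K, a ≠ 0 → ∃ n : ℤ, weilSum p K d a = (n : ℂ)) ∧
    (∃ a : K, a ≠ 0 ∧ weilSum p K d a = 0) := by
  have hp : p.Prime := Fact.out
  obtain ⟨n, -, hq⟩ := FiniteField.card K p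
  have hd0 : d ≠ 0 :=
    ne_zero_of_one_lt_ncard_weilValues hd ((by norm_num : 1 < 3).trans_eq h3.symm)
  obtain ⟨φ, hφ⟩ := exists_mulEquiv_zpow hd0 hd
  obtain ⟨L, _, _, ι, z, hz, hι, σ, j, hj, hσz, hfix⟩ := exists_cyclotomic_field p
  let ψ := traceChar K hz.pow_eq_one
  have hψ : ψ.IsPrimitive := traceChar_isPrimitive hz
  have hW (a : K) : weilSum p K d a = ι (twistedWeilSum ψ φ a) :=
    weilSum_eq_map_twistedWeilSum hz.pow_eq_one hι hφ a
  have hncard := (ncard_weilValues_eq_ncard_range hW).symm.trans h3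
  let t : Kˣ := Units.map (algebraMap (ZMod p) K) j
  have hσ : ∀ x, σ (ψ x) = ψ (t * x) := map_traceChar hz.pow_eq_one hσz
  have ht : Units.mapEquiv φ t = t :=
    map_eq_self_of_ncard_range_twistedWeilSum hp hψ hq hσ
      (by rintro rfl; exact (congrArg _ (Subsingleton.elim j 1)).trans (map_one _)) hfix hncard
  have hint := exists_int_eq_twistedWeilSum hσ hfix ht
  obtain ⟨u, hu⟩ := exists_twistedWeilSum_eq_zero hp hψ hq (fun u => hint u) hncard
  refine ⟨modEq_one_of_algebraMap_zpow_eq_self hj ((hφ t).symm.trans (congrArg Units.val ht)),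
    fun a _ => ?_, u, u.ne_zero, by rw [hW, hu, map_zero]⟩
  obtain ⟨m, hm⟩ := hint a
  exact ⟨m, by rw [hW, ← hm, map_intCast]⟩
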